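/- In every non-idempotent Kleene algebra, the loop-boundary Horn clause holds: for all elements u, v, m0, m1, p, if u·v = 1, v·u = 1, u·m0 = m0·u, and u·m1 = m1·u, then (m0·u·p·v)*·m1 = u·(m0·p)*·m1·v. (This validates the compiler-optimization rule that a unitary u with inverse v commuting with the loop guard can be hoisted out of a quantum while-loop.) -/

import Mathlib

/-!
Conjugation by a unit commutes with star: `(u * x * v)⋆ = u * x⋆ * v` when `u` and `v` are mutually
inverse (`star_conj`). Since `u` commutes with `m₀`, the loop body `m₀ * u * p * v` is the conjugate
of `m₀ * p`; since `v` commutes with `m₁` as well, the trailing `v` moves past the exit branch.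
-/

/-- A non-idempotent Kleene algebra (NKA): a (not necessarily additively
idempotent) semiring equipped with a partial order preserved by `+` and `*`,
and a star operation satisfying `1 + p * p⋆ ≤ p⋆` and the two induction laws. -/
class NKA (K : Type*) extends Semiring K, PartialOrder K where
  star : K → K
  add_le_add' : ∀ {p q r s : K}, p ≤ q → r ≤ s → p + r ≤ q + s
  mul_le_mul' : ∀ {p q r s : K}, p ≤ q → r ≤ s → p * r ≤ q * s
  one_add_mul_star_le : ∀ p : K, 1 + p * star p ≤ star p
  star_ind_left : ∀ {p q r : K}, q + p * r ≤ r → star p * q ≤ r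
  star_ind_right : ∀ {p q r : K}, q + r * p ≤ r → q * star p ≤ r

postfix:max "⋆" => NKA.star

/-- One half of the fact that conjugation by a unit commutes with star: `u * x⋆ * v` is a
prefixed point of `r ↦ 1 + (u * x * v) * r`. The other half is this lemma with `u` and `v`
exchanged. -/
theorem star_conj_le {K : Type*} [NKA K] {u v : K} (huv : u * v = 1) (hvu : v * u = 1) (x : K) :
    (u * x * v)⋆ ≤ u * x⋆ * v := by
  have h : 1 + u * x * v * (u * x⋆ * v) ≤ u * x⋆ * v := by
    have e : 1 + u * x * v * (u * x⋆ * v) = u * (1 + x * x⋆) * v := by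
      calc 1 + u * x * v * (u * x⋆ * v) = 1 + u * x * (v * u) * x⋆ * v := by
            simp only [mul_assoc]
        _ = u * v + u * x * x⋆ * v := by rw [hvu, huv, mul_one]
        _ = u * (1 + x * x⋆) * v := by simp only [mul_add, add_mul, mul_one, mul_assoc]
    rw [e]
    exact NKA.mul_le_mul' (NKA.mul_le_mul' le_rfl (NKA.one_add_mul_star_le x)) le_rfl
  simpa using NKA.star_ind_left h

theorem star_conj {K : Type*} [NKA K] {u v : K} (huv : u * v = 1) (hvu : v * u = 1) (x : K) :
    (u * x * v)⋆ = u * x⋆ * v := by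
  refine le_antisymm (star_conj_le huv hvu x) ?_
  have h := star_conj_le hvu huv (u * x * v)
  have e : v * (u * x * v) * u = x := by
    calc v * (u * x * v) * u = (v * u) * x * (v * u) := by simp only [mul_assoc]
      _ = x := by rw [hvu, one_mul, mul_one]
  rw [e] at h
  calc u * x⋆ * v ≤ u * (v * (u * x * v)⋆ * u) * v :=
        NKA.mul_le_mul' (NKA.mul_le_mul' le_rfl h) le_rfl
    _ = (u * v) * (u * x * v)⋆ * (u * v) := by simp only [mul_assoc]
    _ = (u * x * v)⋆ := by rw [huv, one_mul, mul_one]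

/-- Loop-boundary Horn clause: a unitary `u` with inverse `v` commuting with
the loop guard can be hoisted out of a quantum while-loop. -/
theorem nka_loop_boundary {K : Type*} [NKA K] (u v m₀ m₁ p : K)
    (huv : u * v = 1) (hvu : v * u = 1)
    (hm₀ : u * m₀ = m₀ * u) (hm₁ : u * m₁ = m₁ * u) :
    (m₀ * u * p * v)⋆ * m₁ = u * (m₀ * p)⋆ * m₁ * v := by
  have body : m₀ * u * p * v = u * (m₀ * p) * v := by
    rw [← hm₀, mul_assoc u m₀ p]
  have hv : v * m₁ = m₁ * v := by
    calc v * m₁ = v * (m₁ * u) * v := by rw [mul_assoc, mul_assoc, huv, mul_one]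
      _ = m₁ * v := by rw [← hm₁, ← mul_assoc, hvu, one_mul]
  rw [body, star_conj huv hvu, mul_assoc _ v, hv, ← mul_assoc]
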